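/- Let γ > 0 and F = {e^{−i n^{−γ}} : n ≥ 1} ∪ {1}. Then F is not an 𝓛₂-set: there is no constant C > 0 such that ∫_{Γ(ζ,F)} log²(dist(ζ,F)/dist(ζ',F)) |dζ'|/|ζ−ζ'|² ≤ C/dist(ζ,F) for all ζ ∈ 𝕋∖F. -/

import Mathlib

open MeasureTheory Real Set

noncomputable section

/-- The unit circle in `ℂ`. -/
def circleT : Set ℂ := Metric.sphere (0 : ℂ) 1

/-- Arc-length parametrization of the unit circle. -/
def cpt (θ : ℝ) : ℂ := Complex.exp (θ * Complex.I)

/-- Distance from a point to a set. -/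
def dE (E : Set ℂ) (ζ : ℂ) : ℝ := Metric.infDist ζ E

/-- Arc-length integral over the whole circle. -/
def circInt (f : ℂ → ℝ) : ℝ := ∫ θ in Set.Ioc 0 (2 * π), f (cpt θ)

/-- Arc-length integral over a subset `Λ` of the circle. -/
def circIntOn (Λ : Set ℂ) (f : ℂ → ℝ) : ℝ :=
  ∫ θ in {θ ∈ Set.Ioc 0 (2 * π) | cpt θ ∈ Λ}, f (cpt θ)

/-- `E` has arc-length (Lebesgue) measure zero. -/
def MeasureZeroOnCircle (E : Set ℂ) : Prop :=
  volume {θ ∈ Set.Ioc 0 (2 * π) | cpt θ ∈ E} = 0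

/-- `E` is a Carleson set: `∫_𝕋 log dist(ζ,E) |dζ| > -∞`. -/
def CarlesonSet (E : Set ℂ) : Prop :=
  IntegrableOn (fun θ => Real.log (dE E (cpt θ))) (Set.Ioc 0 (2 * π)) volume

/-- `I(ζ,E)`: the connected component of `𝕋 \ E` containing `ζ`. -/
def compArc (E : Set ℂ) (ζ : ℂ) : Set ℂ := connectedComponentIn (circleT \ E) ζ

/-- `Γ(ζ,E)`. -/
def GammaSet (E : Set ℂ) (ζ : ℂ) : Set ℂ :=
  {ζ' ∈ circleT \ compArc E ζ | dE E ζ' ≤ dE E ζ}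

/-- `Σ(ζ,E)`. -/
def SigmaSet (E : Set ℂ) (ζ : ℂ) : Set ℂ :=
  {ζ' ∈ circleT \ compArc E ζ | dE E ζ ≤ dE E ζ'}

/-- The Richter–Sundberg integrand for the outer function with boundary modulus
`ω(dist(·,E))`. -/
def RSker (ω : ℝ → ℝ) (E : Set ℂ) (ζ ζ' : ℂ) : ℝ :=
  ((ω (dE E ζ')) ^ 2 - (ω (dE E ζ)) ^ 2
    - 2 * (ω (dE E ζ)) ^ 2 * Real.log (ω (dE E ζ') / ω (dE E ζ))) / ‖ζ - ζ'‖ ^ 2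

/-- Local Dirichlet integral `D_ζ(f_{ω,E})` (Richter–Sundberg formula). -/
def locDir (ω : ℝ → ℝ) (E : Set ℂ) (ζ : ℂ) : ℝ :=
  (1 / (2 * π)) * circInt (fun ζ' => RSker ω E ζ ζ')

/-- Local Dirichlet integral restricted to `Λ`. -/
def locDirOn (ω : ℝ → ℝ) (E : Set ℂ) (Λ : Set ℂ) (ζ : ℂ) : ℝ :=
  (1 / (2 * π)) * circIntOn Λ (fun ζ' => RSker ω E ζ ζ')

/-- `E` is an `𝓛₁`-set. -/
def L1Set (E : Set ℂ) : Prop :=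
  ∃ C > 0, ∀ ζ ∈ circleT \ E,
    circIntOn (GammaSet E ζ)
      (fun ζ' => Real.log (dE E ζ / dE E ζ') / ‖ζ - ζ'‖ ^ 2) ≤ C / dE E ζ

/-- The `𝓛₂` inequality with constant `C`. -/
def L2With (E : Set ℂ) (C : ℝ) : Prop :=
  ∀ ζ ∈ circleT \ E,
    circIntOn (GammaSet E ζ)
      (fun ζ' => (Real.log (dE E ζ / dE E ζ')) ^ 2 / ‖ζ - ζ'‖ ^ 2) ≤ C / dE E ζ

/-- `E` is an `𝓛₂`-set. -/
def L2Set (E : Set ℂ) : Prop := ∃ C > 0, L2With E C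

/-- Supremum of `dist(·,E)` over the arc `cpt '' (a,b]`. -/
def arcSup (E : Set ℂ) (a b : ℝ) : ℝ := sSup ((fun θ => dE E (cpt θ)) '' Set.Ioc a b)

/-- `E` is a `𝒦`-set (Kotochigov). -/
def KSet (E : Set ℂ) : Prop :=
  ∃ c > 0, ∀ a b : ℝ, a < b → b ≤ a + 2 * π → c * (b - a) ≤ arcSup E a b

/-- Integral of a weight over the arc `cpt '' (a,b]` (with respect to arc length). -/
def arcInt (w : ℂ → ℝ) (a b : ℝ) : ℝ := ∫ θ in Set.Ioc a b, w (cpt θ)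

/-- Double logarithmic integral of a weight over an arc. -/
def arcDouble (w : ℂ → ℝ) (a b : ℝ) : ℝ :=
  ∫ θ in Set.Ioc a b, (∫ θ' in Set.Ioc a b,
    Real.log (1 / ‖cpt θ - cpt θ'‖) * w (cpt θ) * w (cpt θ'))

/-- Arc-length measure of `{ζ ∈ I : dist(ζ,E) ≤ t}` for the arc `cpt '' (a,b]`. -/
def sublevelMeas (E : Set ℂ) (a b t : ℝ) : ℝ :=
  (volume {θ ∈ Set.Ioc a b | dE E (cpt θ) ≤ t}).toReal

/-- Arc-length measure of `E_t = {ζ ∈ 𝕋 : dist(ζ,E) ≤ t}`. -/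
def EtMeas (E : Set ℂ) (t : ℝ) : ℝ := sublevelMeas E 0 (2 * π) t

/-- The open unit disc. -/
def unitDisc : Set ℂ := Metric.ball (0 : ℂ) 1

/-- Membership in the (holomorphic) Dirichlet space `𝒟`. -/
def MemDirichlet (f : ℂ → ℂ) : Prop :=
  DifferentiableOn ℂ f unitDisc ∧
  (∃ M : ℝ, ∀ r ∈ Set.Ioo (0 : ℝ) 1,
    (∫ θ in Set.Ioc 0 (2 * π), ‖f ((r : ℂ) * cpt θ)‖ ^ 2) ≤ M) ∧
  IntegrableOn (fun z => ‖deriv f z‖ ^ 2) unitDisc volume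

/-- `f` is a multiplier of the Dirichlet space `𝒟`. -/
def IsMultiplierD (f : ℂ → ℂ) : Prop :=
  ∀ g : ℂ → ℂ, MemDirichlet g → MemDirichlet (fun z => f z * g z)

/-- The outer function `f_{ω,E}` with boundary modulus `ω(dist(·,E))`. -/
def outerFun (ω : ℝ → ℝ) (E : Set ℂ) (z : ℂ) : ℂ :=
  Complex.exp ((((2 * π)⁻¹ : ℝ) : ℂ) * ∫ θ in Set.Ioc 0 (2 * π),
    ((cpt θ + z) / (cpt θ - z)) * ((Real.log (ω (dE E (cpt θ))) : ℝ) : ℂ))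

/-- `log ω(dist(·,E)) ∈ L¹(𝕋)`. -/
def LogOmegaInt (ω : ℝ → ℝ) (E : Set ℂ) : Prop :=
  IntegrableOn (fun θ => Real.log (ω (dE E (cpt θ)))) (Set.Ioc 0 (2 * π)) volume

/-- Standing hypotheses on `ω` (with derivative `ω'`): continuous, positive, increasing on
`(0,π]`, differentiable with derivative `ω'`, `t ↦ ω(t^γ)` concave, and `t ↦ tω'(t)/ω(t)`
increasing. -/
def OmegaHyp (ω ω' : ℝ → ℝ) (γ : ℝ) : Prop :=
  ContinuousOn ω (Set.Ioc 0 π) ∧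
  (∀ t ∈ Set.Ioc (0 : ℝ) π, 0 < ω t) ∧
  MonotoneOn ω (Set.Ioc 0 π) ∧
  (∀ t ∈ Set.Ioo (0 : ℝ) π, HasDerivAt ω (ω' t) t) ∧
  ConcaveOn ℝ (Set.Ioc 0 (π ^ γ⁻¹)) (fun t => ω (t ^ γ)) ∧
  MonotoneOn (fun t => t * ω' t / ω t) (Set.Ioo 0 π)

/-- The generalized Cantor set `E_{(ζ_n)}` (with `ξ k` playing the role of `ζ_{k+1}`). -/
def gCantorSet (ξ : ℕ → ℝ) : Set ℂ :=
  {z | ∃ ε : ℕ → Bool, z = Complex.exp (((2 * π : ℝ) : ℂ) * Complex.I *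
    ((∑' n : ℕ, (if ε n then (1 : ℝ) else 0) * (∏ k ∈ Finset.range n, ξ k) * (1 - ξ n) : ℝ) : ℂ))}

end


/-- The sequence `(n + 1)^{-γ}` of (negated) angles of the points of the set. -/
noncomputable def angleSeq (γ : ℝ) (n : ℕ) : ℝ := ((n : ℝ) + 1) ^ (-γ)

/-- The set `{e^{-i n^{-γ}} : n ≥ 1} ∪ {1}`. -/
def powerSet (γ : ℝ) : Set ℂ :=
  {z : ℂ | ∃ n : ℕ, 1 ≤ n ∧
    z = Complex.exp (-(Complex.I * (((n : ℝ) ^ (-γ) : ℝ) : ℂ)))} ∪ {1}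

lemma continuous_cpt : Continuous cpt := by
  unfold cpt; fun_prop

lemma cpt_mem_circleT (x : ℝ) : cpt x ∈ circleT := by
  simp [circleT, cpt, Complex.norm_exp_ofReal_mul_I]

lemma cpt_add_two_pi (x : ℝ) : cpt (2 * π + x) = cpt x := by
  unfold cpt
  push_cast
  rw [add_mul, Complex.exp_add, Complex.exp_two_pi_mul_I, one_mul]

lemma norm_cpt_sub_cpt (x y : ℝ) : ‖cpt x - cpt y‖ = 2 * |sin ((x - y) / 2)| := by
  have h : cpt x - cpt y = cpt y * (Complex.exp (Complex.I * ((x - y : ℝ) : ℂ)) - 1) := by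
    unfold cpt
    rw [mul_sub, ← Complex.exp_add, mul_one]
    congr 2
    push_cast
    ring
  have hy : ‖cpt y‖ = 1 := by simp [cpt, Complex.norm_exp_ofReal_mul_I]
  rw [h, norm_mul, hy, one_mul, Complex.norm_exp_I_mul_ofReal_sub_one]
  simp

lemma norm_cpt_sub_cpt_le (x y : ℝ) : ‖cpt x - cpt y‖ ≤ |x - y| := by
  rw [norm_cpt_sub_cpt]
  have := abs_sin_le_abs (x := (x - y) / 2)
  rw [abs_div, abs_two] at this
  linarith

lemma le_norm_cpt_sub_cpt {x y : ℝ} (h : |x - y| ≤ π) :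
    2 / π * |x - y| ≤ ‖cpt x - cpt y‖ := by
  rw [norm_cpt_sub_cpt]
  have := mul_abs_le_abs_sin (x := (x - y) / 2) (by rw [abs_div, abs_two]; linarith)
  rw [abs_div, abs_two] at this
  linarith

lemma angleSeq_pos (γ : ℝ) (n : ℕ) : 0 < angleSeq γ n := by
  unfold angleSeq; positivity

lemma angleSeq_zero (γ : ℝ) : angleSeq γ 0 = 1 := by simp [angleSeq]

lemma angleSeq_antitone {γ : ℝ} (hγ : 0 < γ) : Antitone (angleSeq γ) := by
  intro m n h
  unfold angleSeq
  have : (m : ℝ) ≤ n := by exact_mod_cast h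
  exact rpow_le_rpow_of_nonpos (by positivity) (by linarith) (by linarith)

lemma angleSeq_le_one {γ : ℝ} (hγ : 0 < γ) (n : ℕ) : angleSeq γ n ≤ 1 := by
  rw [← angleSeq_zero γ]; exact angleSeq_antitone hγ (Nat.zero_le n)

lemma angleSeq_sub_le {γ : ℝ} (hγ : 0 < γ) (n : ℕ) :
    angleSeq γ n - angleSeq γ (n + 1) ≤ γ / (n + 1) * angleSeq γ n := by
  have hn : (0 : ℝ) < (n : ℝ) + 1 := by positivity
  have hr : (0 : ℝ) < 1 + 1 / ((n : ℝ) + 1) := by positivity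
  have h1 : angleSeq γ (n + 1) = angleSeq γ n * (1 + 1 / ((n : ℝ) + 1)) ^ (-γ) := by
    unfold angleSeq
    rw [← mul_rpow hn.le hr.le]
    congr 1
    push_cast
    field_simp
  have h2 : 1 - γ / (n + 1) ≤ (1 + 1 / ((n : ℝ) + 1)) ^ (-γ) := by
    rw [rpow_def_of_pos hr]
    have h3 := log_le_sub_one_of_pos hr
    have h4 := add_one_le_exp (log (1 + 1 / ((n : ℝ) + 1)) * -γ)
    have h5 : γ * log (1 + 1 / ((n : ℝ) + 1)) ≤ γ * (1 / ((n : ℝ) + 1)) :=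
      mul_le_mul_of_nonneg_left (by linarith) hγ.le
    have h6 : γ * (1 / ((n : ℝ) + 1)) = γ / (n + 1) := by ring
    linarith
  have := mul_le_mul_of_nonneg_left h2 (angleSeq_pos γ n).le
  rw [h1]
  linarith

lemma exists_angleSeq_gap {γ : ℝ} (hγ : 0 < γ) {y : ℝ} (hy : 0 < y) (hy1 : y ≤ 1) :
    ∃ n, angleSeq γ (n + 1) < y ∧ y ≤ angleSeq γ n := by
  classical
  have hlim : Filter.Tendsto (angleSeq γ) Filter.atTop (nhds 0) :=
    (tendsto_rpow_neg_atTop hγ).comp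
      (Filter.tendsto_atTop_add_const_right _ 1 tendsto_natCast_atTop_atTop)
  have hex : ∃ n, angleSeq γ n < y := (hlim.eventually_lt_const hy).exists
  have h0 : Nat.find hex ≠ 0 := by
    intro h
    have := Nat.find_spec hex
    rw [h, angleSeq_zero] at this
    linarith
  obtain ⟨k, hk⟩ := Nat.exists_eq_succ_of_ne_zero h0
  refine ⟨k, ?_, ?_⟩
  · have := Nat.find_spec hex
    rwa [hk] at this
  · exact not_lt.mp (Nat.find_min hex (by omega))

lemma mem_powerSet_iff (γ : ℝ) (z : ℂ) :
    z ∈ powerSet γ ↔ (∃ n, z = cpt (2 * π - angleSeq γ n)) ∨ z = cpt (2 * π) := by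
  have h1 : cpt (2 * π) = 1 := by
    have := cpt_add_two_pi 0
    rw [add_zero] at this
    rw [this]; simp [cpt]
  have h2 (x : ℝ) : cpt (2 * π - x) = Complex.exp (-(Complex.I * (x : ℂ))) := by
    rw [sub_eq_add_neg, cpt_add_two_pi, cpt]
    congr 1
    push_cast
    ring
  unfold powerSet
  simp only [mem_union, mem_ofPred_eq, mem_singleton_iff, h1, h2]
  refine or_congr_left ⟨?_, ?_⟩
  · rintro ⟨n, hn, rfl⟩
    obtain ⟨k, rfl⟩ := Nat.exists_eq_succ_of_ne_zero (by omega : n ≠ 0)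
    exact ⟨k, by simp [angleSeq]⟩
  · rintro ⟨n, rfl⟩
    exact ⟨n + 1, by omega, by simp [angleSeq]⟩

lemma powerSet_nonempty (γ : ℝ) : (powerSet γ).Nonempty := ⟨1, Or.inr rfl⟩

lemma continuous_dE_cpt (E : Set ℂ) : Continuous fun θ => dE E (cpt θ) :=
  (Metric.continuous_infDist_pt E).comp continuous_cpt

lemma exists_angle_of_mem_powerSet {γ : ℝ} (hγ : 0 < γ) {z : ℂ} (hz : z ∈ powerSet γ) :
    ∃ x ∈ Icc (2 * π - 1) (2 * π), z = cpt x := by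
  rcases (mem_powerSet_iff γ z).1 hz with ⟨n, rfl⟩ | rfl
  · exact ⟨_, ⟨by linarith [angleSeq_le_one hγ n], by linarith [angleSeq_pos γ n]⟩, rfl⟩
  · exact ⟨_, ⟨by linarith, le_rfl⟩, rfl⟩

/-- Inside a gap, the distance to the set is comparable with the distance to the end points. -/
lemma min_le_dE_powerSet {γ : ℝ} (hγ : 0 < γ) {n : ℕ} {y : ℝ}
    (h1 : angleSeq γ (n + 1) ≤ y) (h2 : y ≤ angleSeq γ n) :
    2 / π * min (y - angleSeq γ (n + 1)) (angleSeq γ n - y) ≤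
      dE (powerSet γ) (cpt (2 * π - y)) := by
  refine (Metric.le_infDist (powerSet_nonempty γ)).2 fun z hz => ?_
  have hπ := pi_gt_three
  have hn := angleSeq_pos γ (n + 1)
  have hn1 := angleSeq_le_one hγ n
  have key (b : ℝ) (hb0 : 0 ≤ b) (hb1 : b ≤ 1)
      (hb : min (y - angleSeq γ (n + 1)) (angleSeq γ n - y) ≤ |b - y|) :
      2 / π * min (y - angleSeq γ (n + 1)) (angleSeq γ n - y) ≤
        dist (cpt (2 * π - y)) (cpt (2 * π - b)) := by
    have he : (2 * π - y) - (2 * π - b) = b - y := by ring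
    have := le_norm_cpt_sub_cpt (x := 2 * π - y) (y := 2 * π - b)
      (by rw [he, abs_le]; constructor <;> linarith)
    rw [he] at this
    rw [dist_eq_norm]
    exact le_trans (mul_le_mul_of_nonneg_left hb (by positivity)) this
  rcases (mem_powerSet_iff γ z).1 hz with ⟨m, rfl⟩ | rfl
  · refine key _ (angleSeq_pos γ m).le (angleSeq_le_one hγ m) ?_
    rcases le_or_gt m n with h | h
    · have := angleSeq_antitone hγ h
      exact (min_le_right _ _).trans ((by linarith : _ ≤ angleSeq γ m - y).trans (le_abs_self _))
    · have := angleSeq_antitone hγ (show n + 1 ≤ m from h)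
      exact (min_le_left _ _).trans
        ((by linarith : _ ≤ -(angleSeq γ m - y)).trans (neg_le_abs _))
  · have := key 0 le_rfl zero_le_one
      ((min_le_left _ _).trans ((by linarith : _ ≤ -(0 - y)).trans (neg_le_abs _)))
    rwa [sub_zero] at this

lemma dE_powerSet_pos {γ : ℝ} (hγ : 0 < γ) {y : ℝ} (hy : 0 < y) (hy1 : y ≤ 1)
    (hya : y ∉ range (angleSeq γ)) : 0 < dE (powerSet γ) (cpt (2 * π - y)) := by
  obtain ⟨n, h1, h2⟩ := exists_angleSeq_gap hγ hy hy1
  have h3 : y < angleSeq γ n := lt_of_le_of_ne h2 fun h => hya ⟨n, h.symm⟩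
  refine lt_of_lt_of_le ?_ (min_le_dE_powerSet hγ h1.le h2)
  exact mul_pos (by positivity) (lt_min (by linarith) (by linarith))

/-- The points of the set are relatively dense near `1`. -/
lemma dE_powerSet_le {γ : ℝ} (hγ : 0 < γ) {ε : ℝ} (hε : 0 < ε) :
    ∃ δ > 0, ∀ y, 0 < y → y < δ → dE (powerSet γ) (cpt (2 * π - y)) ≤ ε * y := by
  obtain ⟨N, hN⟩ := exists_nat_gt (2 * γ + 2 * γ / ε)
  refine ⟨angleSeq γ N, angleSeq_pos γ N, fun y hy hyN => ?_⟩
  obtain ⟨n, h1, h2⟩ := exists_angleSeq_gap hγ hy (hyN.le.trans (angleSeq_le_one hγ N))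
  have hNn : N < n + 1 := by
    by_contra h
    have := angleSeq_antitone hγ (not_lt.mp h)
    linarith
  have hnN : (N : ℝ) < (n : ℝ) + 1 := by exact_mod_cast hNn
  have hpos : 0 < 2 * γ / ε := by positivity
  have hs := angleSeq_sub_le hγ n
  have hn0 : (0 : ℝ) < (n : ℝ) + 1 := by positivity
  have ha := angleSeq_pos γ n
  have hhalf : γ / (n + 1) ≤ 1 / 2 := by rw [div_le_iff₀ hn0]; linarith
  have hεn : γ / (n + 1) ≤ ε / 2 := by
    rw [div_le_iff₀ hn0]
    have h3 : 2 * γ / ε < (n : ℝ) + 1 := by linarith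
    rw [div_lt_iff₀ hε] at h3
    linarith
  have h4 : angleSeq γ n ≤ 2 * angleSeq γ (n + 1) := by
    have := mul_le_mul_of_nonneg_right hhalf ha.le
    linarith
  have hmem : cpt (2 * π - angleSeq γ n) ∈ powerSet γ := (mem_powerSet_iff _ _).2 (Or.inl ⟨n, rfl⟩)
  calc dE (powerSet γ) (cpt (2 * π - y)) ≤ dist (cpt (2 * π - y)) (cpt (2 * π - angleSeq γ n)) :=
        Metric.infDist_le_dist_of_mem hmem
    _ ≤ |(2 * π - y) - (2 * π - angleSeq γ n)| := by
        rw [dist_eq_norm]; exact norm_cpt_sub_cpt_le _ _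
    _ = angleSeq γ n - y := by rw [abs_of_nonneg] <;> linarith
    _ ≤ γ / (n + 1) * angleSeq γ n := by linarith
    _ ≤ ε / 2 * (2 * y) := by
        apply mul_le_mul hεn (by linarith) ha.le (by positivity)
    _ = ε * y := by ring

lemma le_dE_powerSet {γ : ℝ} (hγ : 0 < γ) {t : ℝ} (ht : 0 < t) (ht1 : t ≤ 1) :
    2 / π * t ≤ dE (powerSet γ) (cpt (2 * π + t)) := by
  refine (Metric.le_infDist (powerSet_nonempty γ)).2 fun z hz => ?_
  obtain ⟨x, ⟨hx1, hx2⟩, rfl⟩ := exists_angle_of_mem_powerSet hγ hz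
  have hπ := pi_gt_three
  have h := le_norm_cpt_sub_cpt (x := 2 * π + t) (y := x)
    (by rw [abs_le]; constructor <;> linarith)
  rw [dist_eq_norm]
  refine le_trans (mul_le_mul_of_nonneg_left ?_ (by positivity)) h
  exact le_trans (by linarith) (le_abs_self _)

/-- Points of the arc `(0, 2π - 1)` lie in one component of the complement. -/
lemma cpt_mem_compArc {γ : ℝ} (hγ : 0 < γ) {s t : ℝ} (ht : t ∈ Ioo 0 (2 * π - 1))
    (hs : s ∈ Ioo 0 (2 * π - 1)) : cpt s ∈ compArc (powerSet γ) (cpt t) := by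
  have hpre : IsPreconnected (cpt '' Ioo 0 (2 * π - 1)) :=
    isPreconnected_Ioo.image _ continuous_cpt.continuousOn
  refine hpre.subset_connectedComponentIn (mem_image_of_mem _ ht) ?_ (mem_image_of_mem _ hs)
  rintro _ ⟨u, hu, rfl⟩
  refine ⟨cpt_mem_circleT u, fun hmem => ?_⟩
  obtain ⟨x, ⟨hx1, hx2⟩, hx⟩ := exists_angle_of_mem_powerSet hγ hmem
  have h0 : ‖cpt x - cpt u‖ = 0 := by rw [hx, sub_self, norm_zero]
  rw [norm_cpt_sub_cpt] at h0
  have := sin_pos_of_pos_of_lt_pi (x := (x - u) / 2) (by linarith [hu.2]) (by linarith [hu.1])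
  rw [abs_of_pos this] at h0
  linarith

/-- The points `1` and `e^{-i}` separate the two arcs of the circle between them. -/
lemma cpt_notMem_compArc {γ : ℝ} {t y : ℝ} (ht : 0 < t) (ht1 : t ≤ 1)
    (hy : 0 < y) (hy1 : y < 1) : cpt (2 * π - y) ∉ compArc (powerSet γ) (cpt t) := by
  intro hmem
  have hπ := pi_gt_three
  set ℓ : ℂ → ℝ := fun z => (z * cpt (1 / 2)).re with hℓ
  have hℓc : Continuous ℓ := by simp only [hℓ]; fun_prop
  have hℓv (x : ℝ) : ℓ (cpt x) = cos (x + 1 / 2) := by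
    simp only [hℓ, cpt]
    rw [← Complex.exp_add, ← add_mul, ← Complex.ofReal_add, Complex.exp_ofReal_mul_I_re]
  have htin : cpt t ∈ compArc (powerSet γ) (cpt t) := by
    by_contra h
    have : compArc (powerSet γ) (cpt t) = ∅ := by
      unfold compArc at *
      by_cases h' : cpt t ∈ circleT \ powerSet γ
      · exact absurd (mem_connectedComponentIn h') h
      · exact connectedComponentIn_eq_empty h'
    rw [this] at hmem
    exact hmem
  have hc1 : ℓ (cpt t) ≤ cos (1 / 2) := by
    rw [hℓv]
    exact cos_le_cos_of_nonneg_of_le_pi (by norm_num) (by linarith) (by linarith)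
  have hc2 : cos (1 / 2) ≤ ℓ (cpt (2 * π - y)) := by
    rw [hℓv, show 2 * π - y + 1 / 2 = (1 / 2 - y) + 2 * π by ring, cos_add_two_pi, ← cos_abs (1 / 2 - y)]
    refine cos_le_cos_of_nonneg_of_le_pi (abs_nonneg _) (by linarith) ?_
    rw [abs_le]; constructor <;> linarith
  obtain ⟨z, hz, hzc⟩ := (isPreconnected_connectedComponentIn.intermediate_value htin hmem
    hℓc.continuousOn) ⟨hc1, hc2⟩
  obtain ⟨hzT, hzE⟩ := connectedComponentIn_subset _ _ hz
  have hznorm : ‖z‖ = 1 := by simpa [circleT] using hzT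
  have hzarg : z = cpt z.arg := by
    have := Complex.norm_mul_exp_arg_mul_I z
    rw [hznorm, Complex.ofReal_one, one_mul] at this
    exact this.symm
  have hcos : cos (1 / 2) = cos (z.arg + 1 / 2) := by rw [← hℓv, ← hzarg, hzc]
  obtain ⟨k, hk⟩ := cos_eq_cos_iff.1 hcos
  have hper (k : ℤ) (x : ℝ) : cpt (2 * k * π + x) = cpt x := by
    unfold cpt
    rw [show ((2 * k * π + x : ℝ) : ℂ) * Complex.I = x * Complex.I + k * (2 * π * Complex.I) by
      push_cast; ring]
    exact Complex.exp_periodic.int_mul k _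
  apply hzE
  rw [mem_powerSet_iff, hzarg]
  rcases hk with hk | hk
  · right
    rw [show z.arg = 2 * k * π + 0 by linarith, hper]
    simpa using (cpt_add_two_pi 0).symm
  · left
    refine ⟨0, ?_⟩
    rw [angleSeq_zero, show z.arg = 2 * k * π + (-1) by linarith, hper, sub_eq_add_neg,
      cpt_add_two_pi]

lemma integrableOn_rpow_gap {p q η : ℝ} (hpq : p ≤ q) (hη : η < 1) :
    IntegrableOn (fun x => (x - p) ^ (-η) + (q - x) ^ (-η)) (Ioo p q) ∧
      ∫ x in Ioo p q, ((x - p) ^ (-η) + (q - x) ^ (-η)) = 2 / (1 - η) * (q - p) ^ (1 - η) := by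
  have hη' : -1 < -η := by linarith
  have hi (a b : ℝ) : IntervalIntegrable (fun x : ℝ => x ^ (-η)) volume a b :=
    intervalIntegral.intervalIntegrable_rpow' hη'
  have h1 : IntervalIntegrable (fun x => (x - p) ^ (-η)) volume p q := by
    simpa using (hi 0 (q - p)).comp_sub_right p
  have h2 : IntervalIntegrable (fun x => (q - x) ^ (-η)) volume p q := by
    simpa using (hi (q - p) 0).comp_sub_left q
  have hI : ∫ x in (0 : ℝ)..(q - p), x ^ (-η) = (q - p) ^ (1 - η) / (1 - η) := by
    rw [integral_rpow (Or.inl hη'), show -η + 1 = 1 - η by ring, zero_rpow (by linarith), sub_zero]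
  constructor
  · exact ((intervalIntegrable_iff_integrableOn_Ioc_of_le hpq).1 (h1.add h2)).mono_set
      Ioo_subset_Ioc_self
  · rw [← integral_Ioc_eq_integral_Ioo, ← intervalIntegral.integral_of_le hpq,
      intervalIntegral.integral_add h1 h2,
      intervalIntegral.integral_comp_sub_right (fun x => x ^ (-η)) p,
      intervalIntegral.integral_comp_sub_left (fun x => x ^ (-η)) q, sub_self, sub_self, hI]
    ring

lemma summable_gap_rpow {γ η : ℝ} (hγ : 0 < γ) (hη1 : η < 1) (hη : 1 < (γ + 1) * (1 - η)) :
    Summable fun n => (angleSeq γ n - angleSeq γ (n + 1)) ^ (1 - η) := by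
  have hs : Summable fun n : ℕ => γ ^ (1 - η) * ((n + 1 : ℕ) : ℝ) ^ (-((γ + 1) * (1 - η))) :=
    ((summable_nat_add_iff 1).2 (summable_nat_rpow.2 (by linarith))).mul_left _
  refine hs.of_nonneg_of_le (fun n => ?_) fun n => ?_
  · exact rpow_nonneg (sub_nonneg.2 (angleSeq_antitone hγ n.le_succ)) _
  · have hn : (0 : ℝ) < (n : ℝ) + 1 := by positivity
    have h : angleSeq γ n - angleSeq γ (n + 1) ≤ γ * ((n : ℝ) + 1) ^ (-(γ + 1)) := by
      refine (angleSeq_sub_le hγ n).trans_eq ?_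
      unfold angleSeq
      rw [show -(γ + 1) = -γ - 1 by ring, rpow_sub_one hn.ne']
      ring
    refine (rpow_le_rpow (sub_nonneg.2 (angleSeq_antitone hγ n.le_succ)) h
      (by linarith)).trans_eq ?_
    rw [mul_rpow hγ.le (by positivity), ← rpow_mul hn.le]
    push_cast
    ring_nf

lemma dE_powerSet_rpow_le {γ η : ℝ} (hγ : 0 < γ) (hη : 0 < η) {n : ℕ} {θ : ℝ}
    (hθ : θ ∈ Ioo (2 * π - angleSeq γ n) (2 * π - angleSeq γ (n + 1))) :
    dE (powerSet γ) (cpt θ) ^ (-η) ≤ (2 / π) ^ (-η) *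
      ((θ - (2 * π - angleSeq γ n)) ^ (-η) + (2 * π - angleSeq γ (n + 1) - θ) ^ (-η)) := by
  obtain ⟨h1, h2⟩ := hθ
  have h := min_le_dE_powerSet (y := 2 * π - θ) hγ (n := n) (by linarith) (by linarith)
  rw [sub_sub_cancel, show 2 * π - θ - angleSeq γ (n + 1) = 2 * π - angleSeq γ (n + 1) - θ by ring,
    show angleSeq γ n - (2 * π - θ) = θ - (2 * π - angleSeq γ n) by ring] at h
  have hu : 0 < θ - (2 * π - angleSeq γ n) := by linarith
  have hv : 0 < 2 * π - angleSeq γ (n + 1) - θ := by linarith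
  have hm := lt_min hv hu
  refine (rpow_le_rpow_of_nonpos (mul_pos (by positivity) hm) h (by linarith)).trans ?_
  rw [mul_rpow (by positivity) hm.le]
  refine mul_le_mul_of_nonneg_left ?_ (by positivity)
  rcases min_cases (2 * π - angleSeq γ (n + 1) - θ) (θ - (2 * π - angleSeq γ n)) with h | h <;>
    rw [h.1]
  · exact le_add_of_nonneg_left (by positivity)
  · exact le_add_of_nonneg_right (by positivity)

lemma integrableOn_dE_powerSet_rpow {γ η : ℝ} (hγ : 0 < γ) (hη0 : 0 < η) (hη1 : η < 1)
    (hη : 1 < (γ + 1) * (1 - η)) :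
    IntegrableOn (fun θ => dE (powerSet γ) (cpt θ) ^ (-η)) (Icc (2 * π - 1) (2 * π)) := by
  set f : ℝ → ℝ := fun θ => dE (powerSet γ) (cpt θ) ^ (-η) with hf
  have hfm : Measurable f := (continuous_dE_cpt _).measurable.pow_const _
  have hf0 (θ : ℝ) : 0 ≤ f θ := rpow_nonneg Metric.infDist_nonneg _
  set s : ℕ → Set ℝ := fun n => Ioo (2 * π - angleSeq γ n) (2 * π - angleSeq γ (n + 1)) with hs
  have hle (n : ℕ) : 2 * π - angleSeq γ n ≤ 2 * π - angleSeq γ (n + 1) := by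
    linarith [angleSeq_antitone hγ n.le_succ]
  have hgap (n : ℕ) := integrableOn_rpow_gap (hle n) hη1
  have hbound (n : ℕ) : ∀ θ ∈ s n, f θ ≤ _ := fun θ hθ => dE_powerSet_rpow_le hγ hη0 hθ
  have hint (n : ℕ) : IntegrableOn f (s n) := by
    refine Integrable.mono' ((hgap n).1.const_mul ((2 / π) ^ (-η))) hfm.aestronglyMeasurable ?_
    refine (ae_restrict_mem measurableSet_Ioo).mono fun θ hθ => ?_
    rw [norm_of_nonneg (hf0 θ)]
    exact hbound n θ hθ
  have hsum : Summable fun n => ∫ θ in s n, ‖f θ‖ := by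
    refine ((summable_gap_rpow hγ hη1 hη).mul_left
      ((2 / π) ^ (-η) * (2 / (1 - η)))).of_nonneg_of_le
      (fun n => integral_nonneg fun _ => norm_nonneg _) fun n => ?_
    have := setIntegral_mono_on (hint n).norm ((hgap n).1.const_mul ((2 / π) ^ (-η)))
      measurableSet_Ioo fun θ hθ => by
        rw [norm_of_nonneg (hf0 θ)]
        exact hbound n θ hθ
    rw [integral_const_mul, (hgap n).2] at this
    refine this.trans_eq ?_
    rw [mul_assoc]
    congr 3
    ring
  refine (integrableOn_iUnion_of_summable_integral_norm hint hsum).mono_set_ae ?_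
  have hc : (insert (2 * π) (range fun n => 2 * π - angleSeq γ n)).Countable :=
    (countable_range _).insert _
  filter_upwards [hc.ae_notMem volume] with θ hθ hθI
  obtain ⟨hθ1, hθ2⟩ := hθI
  rw [mem_insert_iff, mem_range, not_or] at hθ
  have hlt : θ < 2 * π := lt_of_le_of_ne hθ2 hθ.1
  obtain ⟨n, h1, h2⟩ := exists_angleSeq_gap hγ (y := 2 * π - θ) (by linarith) (by linarith)
  refine mem_iUnion.2 ⟨n, lt_of_le_of_ne (by linarith) fun h => hθ.2 ⟨n, h⟩, by linarith⟩

lemma log_div_sq_le {η d D : ℝ} (hη : 0 < η) (hd : 0 < d) (hD : 0 ≤ D) (hDd : D ≤ d) :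
    log (d / D) ^ 2 ≤ (2 / η) ^ 2 * d ^ η * D ^ (-η) := by
  rcases hD.eq_or_lt with rfl | hD
  · rw [div_zero, log_zero, zero_pow two_ne_zero]
    positivity
  have h0 : 0 ≤ log (d / D) := log_nonneg ((one_le_div hD).2 hDd)
  have h1 := log_le_rpow_div (x := d / D) (by positivity) (half_pos hη)
  calc log (d / D) ^ 2 ≤ ((d / D) ^ (η / 2) / (η / 2)) ^ 2 := by gcongr
    _ = (2 / η) ^ 2 * ((d / D) ^ (η / 2)) ^ 2 := by field_simp
    _ = (2 / η) ^ 2 * (d / D) ^ η := by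
      rw [← rpow_natCast ((d / D) ^ (η / 2)) 2, ← rpow_mul (by positivity)]
      norm_num
    _ = (2 / η) ^ 2 * d ^ η * D ^ (-η) := by
      rw [div_rpow hd.le hD.le, rpow_neg hD.le]
      ring

/-- The `𝓛₂` integrand is integrable over `Γ(ζ, F)` when `ζ = e^{it}`, `0 < t ≤ 1`. -/
lemma integrableOn_L2_integrand {γ : ℝ} (hγ : 0 < γ) {t : ℝ} (ht : 0 < t) (ht1 : t ≤ 1) :
    IntegrableOn (fun θ => log (dE (powerSet γ) (cpt t) / dE (powerSet γ) (cpt θ)) ^ 2 /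
        ‖cpt t - cpt θ‖ ^ 2)
      {θ ∈ Ioc 0 (2 * π) | cpt θ ∈ GammaSet (powerSet γ) (cpt t)} := by
  have hπ := pi_gt_three
  set d := dE (powerSet γ) (cpt t) with hd
  have hdpos : 0 < d := by
    have := le_dE_powerSet hγ ht ht1
    rw [cpt_add_two_pi] at this
    exact lt_of_lt_of_le (by positivity) this
  set η := γ / (2 * (γ + 1)) with hηdef
  have hη0 : 0 < η := by positivity
  have hη1 : η < 1 := by rw [hηdef, div_lt_one (by positivity)]; linarith
  have hη : 1 < (γ + 1) * (1 - η) := by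
    have : (γ + 1) * (1 - η) = 1 + γ / 2 := by rw [hηdef]; field_simp; ring
    linarith
  set S : Set ℝ := Icc (2 * π - 1) (2 * π) ∩ {θ | dE (powerSet γ) (cpt θ) ≤ d} with hS
  have hSm : MeasurableSet S := measurableSet_Icc.inter
    (measurableSet_le (continuous_dE_cpt _).measurable measurable_const)
  have hsub : {θ ∈ Ioc 0 (2 * π) | cpt θ ∈ GammaSet (powerSet γ) (cpt t)} ⊆ S := by
    rintro θ ⟨⟨h1, h2⟩, ⟨-, hcomp⟩, hle⟩
    refine ⟨⟨?_, h2⟩, hle⟩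
    by_contra h
    exact hcomp (cpt_mem_compArc hγ ⟨ht, by linarith⟩ ⟨h1, not_le.1 h⟩)
  refine IntegrableOn.mono_set ?_ hsub
  set m := 2 / π * t with hm
  have hmpos : 0 < m := by positivity
  refine Integrable.mono' ((((integrableOn_dE_powerSet_rpow hγ hη0 hη1 hη).mono_set
    inter_subset_left).const_mul ((2 / η) ^ 2 * d ^ η)).div_const (m ^ 2)) ?_ ?_
  · refine Measurable.aestronglyMeasurable ?_
    refine Measurable.div (((measurable_const.div (continuous_dE_cpt _).measurable).log).pow_const _)
      (((continuous_const.sub continuous_cpt).norm.pow 2).measurable)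
  · refine (ae_restrict_mem hSm).mono fun θ ⟨⟨h1, h2⟩, hle⟩ => ?_
    rw [norm_of_nonneg (by positivity)]
    have hdist : m ≤ ‖cpt t - cpt θ‖ := by
      have := le_norm_cpt_sub_cpt (x := 2 * π + t) (y := θ)
        (by rw [abs_le]; constructor <;> linarith)
      rw [cpt_add_two_pi] at this
      refine le_trans (mul_le_mul_of_nonneg_left ?_ (by positivity)) this
      exact le_trans (by linarith) (le_abs_self _)
    have hlog := log_div_sq_le hη0 hdpos Metric.infDist_nonneg hle
    have hlog0 := (sq_nonneg (log (d / dE (powerSet γ) (cpt θ)))).trans hlog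
    exact div_le_div₀ hlog0 hlog (by positivity) (by gcongr)

/-- Lower bound for the `𝓛₂` integral at a point close to `1`, on the side without points
of the set. -/
lemma exists_le_circIntOn {γ : ℝ} (hγ : 0 < γ) {M : ℝ} (hM : 0 < M) :
    ∃ t, 0 < t ∧ t ≤ 1 ∧ M ^ 2 / (4 * t) ≤ circIntOn (GammaSet (powerSet γ) (cpt t))
      (fun ζ' => log (dE (powerSet γ) (cpt t) / dE (powerSet γ) ζ') ^ 2 / ‖cpt t - ζ'‖ ^ 2) := by
  have hπ := pi_gt_three
  set ε := 2 / π * exp (-M) with hε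
  have hεpos : 0 < ε := by positivity
  obtain ⟨δ, hδ, hD⟩ := dE_powerSet_le hγ hεpos
  set t := min 1 (δ / 2) with ht
  have ht0 : 0 < t := lt_min one_pos (by linarith)
  have ht1 : t ≤ 1 := min_le_left _ _
  have htδ : t < δ := (min_le_right _ _).trans_lt (by linarith)
  refine ⟨t, ht0, ht1, ?_⟩
  have hd : 2 / π * t ≤ dE (powerSet γ) (cpt t) := by
    have := le_dE_powerSet hγ ht0 ht1
    rwa [cpt_add_two_pi] at this
  set d := dE (powerSet γ) (cpt t) with hddef
  have hdpos : 0 < d := lt_of_lt_of_le (by positivity) hd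
  set f : ℝ → ℝ := fun θ => log (d / dE (powerSet γ) (cpt θ)) ^ 2 / ‖cpt t - cpt θ‖ ^ 2 with hf
  have hint := integrableOn_L2_integrand hγ ht0 ht1
  have hDle : ∀ θ ∈ Ioo (2 * π - t) (2 * π), dE (powerSet γ) (cpt θ) ≤ exp (-M) * d := by
    rintro θ ⟨h1, h2⟩
    have := hD (2 * π - θ) (by linarith) (by linarith)
    rw [sub_sub_cancel] at this
    calc dE (powerSet γ) (cpt θ) ≤ ε * (2 * π - θ) := this
      _ ≤ ε * t := by gcongr; linarith
      _ = exp (-M) * (2 / π * t) := by rw [hε]; ring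
      _ ≤ exp (-M) * d := by gcongr
  have hsub : Ioo (2 * π - t) (2 * π) ⊆
      {θ ∈ Ioc 0 (2 * π) | cpt θ ∈ GammaSet (powerSet γ) (cpt t)} := by
    intro θ hθ
    refine ⟨⟨by linarith [hθ.1], hθ.2.le⟩, ⟨cpt_mem_circleT θ, ?_⟩, ?_⟩
    · have := cpt_notMem_compArc (γ := γ) (y := 2 * π - θ) ht0 ht1 (by linarith [hθ.2])
        (by linarith [hθ.1])
      rwa [sub_sub_cancel] at this
    · refine (hDle θ hθ).trans (mul_le_of_le_one_left hdpos.le ?_)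
      exact exp_le_one_iff.2 (by linarith)
  have hc : (range fun n => 2 * π - angleSeq γ n).Countable := countable_range _
  have hlow : ∀ᵐ θ, θ ∈ Ioo (2 * π - t) (2 * π) → M ^ 2 / (2 * t) ^ 2 ≤ f θ := by
    filter_upwards [hc.ae_notMem volume] with θ hθ hθI
    have hpos : 0 < dE (powerSet γ) (cpt θ) := by
      have := dE_powerSet_pos (y := 2 * π - θ) hγ (by linarith [hθI.2]) (by linarith [hθI.1])
        fun ⟨n, hn⟩ => hθ ⟨n, by simp only [hn]; ring⟩
      rwa [sub_sub_cancel] at this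
    have hlog : M ≤ log (d / dE (powerSet γ) (cpt θ)) := by
      rw [le_log_iff_exp_le (by positivity), le_div_iff₀ hpos]
      calc exp M * dE (powerSet γ) (cpt θ) ≤ exp M * (exp (-M) * d) := by
            gcongr; exact hDle θ hθI
        _ = d := by rw [← mul_assoc, ← exp_add, add_neg_cancel, exp_zero, one_mul]
    have hnear : ‖cpt t - cpt θ‖ ≤ 2 * t := by
      have := norm_cpt_sub_cpt_le (2 * π + t) θ
      rw [cpt_add_two_pi] at this
      refine this.trans ?_
      rw [abs_le]
      constructor <;> linarith [hθI.1, hθI.2]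
    have hfar : 0 < ‖cpt t - cpt θ‖ := by
      have := le_norm_cpt_sub_cpt (x := 2 * π + t) (y := θ)
        (by rw [abs_le]; constructor <;> linarith [hθI.1, hθI.2])
      rw [cpt_add_two_pi] at this
      refine lt_of_lt_of_le (mul_pos (by positivity) (abs_pos.2 ?_)) this
      linarith [hθI.2]
    simp only [hf]
    gcongr
  calc M ^ 2 / (4 * t) = ∫ _ in Ioo (2 * π - t) (2 * π), M ^ 2 / (2 * t) ^ 2 := by
        rw [setIntegral_const, volume_real_Ioo_of_le (by linarith), smul_eq_mul]
        field_simp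
        ring
    _ ≤ ∫ θ in Ioo (2 * π - t) (2 * π), f θ :=
        setIntegral_mono_on_ae (integrableOn_const (by simp)) (hint.mono_set hsub)
          measurableSet_Ioo hlow
    _ ≤ _ := setIntegral_mono_set hint (Filter.Eventually.of_forall fun θ => by positivity)
        (Filter.Eventually.of_forall hsub)

/-- `F = {e^{-i n^{-γ}} : n ≥ 1} ∪ {1}` is not an `𝓛₂`-set. -/
theorem statement11 (γ : ℝ) (hγ : 0 < γ) :
    ¬ L2Set ({z : ℂ | ∃ n : ℕ, 1 ≤ n ∧
        z = Complex.exp (-(Complex.I * (((n : ℝ) ^ (-γ) : ℝ) : ℂ)))} ∪ {1}) := by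
  change ¬ L2Set (powerSet γ)
  rintro ⟨C, hC, h⟩
  have hπ := pi_pos
  obtain ⟨t, ht, ht1, hlow⟩ := exists_le_circIntOn hγ (M := 2 * π * C + 1) (by positivity)
  have hd := le_dE_powerSet hγ ht ht1
  rw [cpt_add_two_pi] at hd
  have hm : 0 < 2 / π * t := by positivity
  have hnot : cpt t ∉ powerSet γ := fun hmem => by
    have : dE (powerSet γ) (cpt t) = 0 := Metric.infDist_zero_of_mem hmem
    linarith
  have hup : C / dE (powerSet γ) (cpt t) ≤ C / (2 / π * t) := by gcongr
  have hle := hlow.trans ((h (cpt t) ⟨cpt_mem_circleT t, hnot⟩).trans hup)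
  rw [show C / (2 / π * t) = 2 * π * C / (4 * t) by field_simp; ring,
    div_le_div_iff_of_pos_right (by positivity)] at hle
  nlinarith [mul_pos hπ hC]
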